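/- Let n be an even positive integer and Θ an invertible real skew-symmetric n×n matrix. For all Schwartz functions f, g ∈ 𝒮(ℝ^n, ℂ) and all x ∈ ℝ^n, the complex conjugate satisfies conj((f ⋆_Θ g)(x)) = ((conj g) ⋆_Θ (conj f))(x); that is, complex conjugation is an involution for the Moyal product: (f ⋆_Θ g)^* = g^* ⋆_Θ f^*. -/

import Mathlib

/-!
Conjugation reverses the sign of the phase `⟨u, Θ⁻¹ v⟩`, and exchanging `u` and `v` transposes
`Θ⁻¹`; together they replace `Θ` by `-Θᵀ`, which is `Θ` itself in the skew-symmetric case. The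
exchange is an application of Fubini's theorem, legitimate because the kernel is unimodular.
-/

open MeasureTheory Real

/-- The Moyal product of two functions on `ℝ^n`, for an invertible deformation
matrix `Θ`. -/
noncomputable def moyal (n : ℕ) (Θ : Matrix (Fin n) (Fin n) ℝ)
    (f g : (Fin n → ℝ) → ℂ) : (Fin n → ℝ) → ℂ := fun x =>
  (((π ^ n * |Θ.det|)⁻¹ : ℝ) : ℂ) *
    ∫ u : Fin n → ℝ, ∫ v : Fin n → ℝ,
      f (x + u) * g (x + v) *
        Complex.exp (-2 * Complex.I * ((∑ i, u i * Θ⁻¹.mulVec v i : ℝ) : ℂ))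

open scoped ComplexConjugate Matrix

section Matrix

variable {ι R : Type*} [Fintype ι] [DecidableEq ι] [CommRing R]

theorem inv_neg_transpose {A : Matrix ι ι R} (hA : IsUnit A.det) : (-Aᵀ)⁻¹ = -A⁻¹ᵀ := by
  apply Matrix.inv_eq_right_inv
  rw [neg_mul_neg, ← Matrix.transpose_mul, Matrix.nonsing_inv_mul _ hA, Matrix.transpose_one]

theorem abs_det_neg_transpose [LinearOrder R] [IsStrictOrderedRing R] (A : Matrix ι ι R) :
    |(-Aᵀ).det| = |A.det| := by
  rw [Matrix.det_neg, Matrix.det_transpose, abs_mul, abs_neg_one_pow, one_mul]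

end Matrix

theorem conj_integral_integral_swap {α β 𝕜 : Type*} [RCLike 𝕜] [MeasurableSpace α]
    [MeasurableSpace β] {μ : Measure α} {ν : Measure β} [SFinite μ] [SFinite ν] {F : α → β → 𝕜}
    (hF : Integrable (Function.uncurry F) (μ.prod ν)) :
    conj (∫ a, ∫ b, F a b ∂ν ∂μ) = ∫ b, ∫ a, conj (F a b) ∂μ ∂ν := by
  simp only [integral_integral_swap hF, integral_conj]

section MoyalKernel

variable {ι κ : Type*} [Fintype ι] [Fintype κ]

/-- The oscillatory kernel `exp(-2i⟨u, A v⟩)`. The Moyal product with deformation matrix `Θ` uses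
`A = Θ⁻¹`; rectangular matrices are allowed. -/
noncomputable def moyalKernel (A : Matrix ι κ ℝ) (u : ι → ℝ) (v : κ → ℝ) : ℂ :=
  Complex.exp (-2 * Complex.I * ((u ⬝ᵥ A *ᵥ v : ℝ) : ℂ))

theorem moyal_apply {n : ℕ} (Θ : Matrix (Fin n) (Fin n) ℝ) (f g : (Fin n → ℝ) → ℂ)
    (x : Fin n → ℝ) :
    moyal n Θ f g x = (((π ^ n * |Θ.det|)⁻¹ : ℝ) : ℂ) *
      ∫ u, ∫ v, f (x + u) * g (x + v) * moyalKernel Θ⁻¹ u v :=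
  rfl

theorem norm_moyalKernel (A : Matrix ι κ ℝ) (u : ι → ℝ) (v : κ → ℝ) : ‖moyalKernel A u v‖ = 1 := by
  simp [moyalKernel, Complex.norm_exp]

theorem continuous_moyalKernel (A : Matrix ι κ ℝ) :
    Continuous fun p : (ι → ℝ) × (κ → ℝ) ↦ moyalKernel A p.1 p.2 := by
  have h_phase : Continuous fun p : (ι → ℝ) × (κ → ℝ) ↦ p.1 ⬝ᵥ A *ᵥ p.2 :=
    continuous_fst.dotProduct (continuous_const.matrix_mulVec continuous_snd)
  exact (continuous_const.mul (Complex.continuous_ofReal.comp h_phase)).cexp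

theorem conj_moyalKernel (A : Matrix ι κ ℝ) (u : ι → ℝ) (v : κ → ℝ) :
    conj (moyalKernel A u v) = moyalKernel (-Aᵀ) v u := by
  have h_phase : v ⬝ᵥ (-Aᵀ) *ᵥ u = -(u ⬝ᵥ A *ᵥ v) := by
    rw [Matrix.neg_mulVec, dotProduct_neg, Matrix.dotProduct_transpose_mulVec]
  simp [moyalKernel, h_phase, ← Complex.exp_conj, Complex.conj_ofNat]

theorem integrable_mul_moyalKernel {μ : Measure ((ι → ℝ) × (κ → ℝ))}
    {F : (ι → ℝ) × (κ → ℝ) → ℂ} (hF : Integrable F μ) (A : Matrix ι κ ℝ) :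
    Integrable (fun p ↦ F p * moyalKernel A p.1 p.2) μ :=
  hF.mul_bdd (continuous_moyalKernel A).aestronglyMeasurable
    (.of_forall fun p ↦ (norm_moyalKernel A p.1 p.2).le)

theorem conj_integral_integral_mul_moyalKernel {μ : Measure (ι → ℝ)} {ν : Measure (κ → ℝ)}
    [SFinite μ] [SFinite ν] {f : (ι → ℝ) → ℂ} {g : (κ → ℝ) → ℂ} (hf : Integrable f μ)
    (hg : Integrable g ν) (A : Matrix ι κ ℝ) :
    conj (∫ u, ∫ v, f u * g v * moyalKernel A u v ∂ν ∂μ) =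
      ∫ v, ∫ u, conj (g v) * conj (f u) * moyalKernel (-Aᵀ) v u ∂μ ∂ν := by
  rw [conj_integral_integral_swap (integrable_mul_moyalKernel (hf.mul_prod hg) A)]
  simp only [map_mul, conj_moyalKernel, mul_comm (conj (f _))]

end MoyalKernel

theorem moyal_conj_involution_general {n : ℕ} {Θ : Matrix (Fin n) (Fin n) ℝ}
    (hdet : IsUnit Θ.det) {f g : (Fin n → ℝ) → ℂ} (hf : Integrable f) (hg : Integrable g)
    (x : Fin n → ℝ) :
    conj (moyal n Θ f g x) = moyal n (-Θᵀ) (fun y ↦ conj (g y)) (fun y ↦ conj (f y)) x := by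
  simp only [moyal_apply, map_mul, Complex.conj_ofReal, abs_det_neg_transpose,
    inv_neg_transpose hdet, conj_integral_integral_mul_moyalKernel (hf.comp_add_left x)
      (hg.comp_add_left x)]

/-- Complex conjugation is an involution for the Moyal product:
`(f ⋆_Θ g)^* = g^* ⋆_Θ f^*`. -/
theorem moyal_conj_involution
    (n : ℕ) (hn : 0 < n) (he : Even n)
    (Θ : Matrix (Fin n) (Fin n) ℝ) (hskew : Θ.transpose = -Θ)
    (hdet : IsUnit Θ.det)
    (f g : SchwartzMap (Fin n → ℝ) ℂ) (x : Fin n → ℝ) :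
    (starRingEnd ℂ) (moyal n Θ (⇑f) (⇑g) x) =
      moyal n Θ (fun y => (starRingEnd ℂ) (g y)) (fun y => (starRingEnd ℂ) (f y)) x := by
  rw [moyal_conj_involution_general hdet f.integrable g.integrable, hskew, neg_neg]
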